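/- Two $k$-uniform hypergraphs $H_1, H_2$ on $n$ vertices are said to \emph{pack} if there is a bijection $f : V(H_1) \to V(H_2)$ such that $f(e) \notin E(H_2)$ for every $e \in E(H_1)$. For $n \ge k$, let $m(n,k)$ be the minimum of $|E(H_1)| + |E(H_2)|$ over all pairs of $k$-uniform hypergraphs $H_1, H_2$ on $n$ vertices that do not pack. Let $k \ge 3$ be odd. There exists a constant $c$ depending only on $k$ such that for all $n \ge k$ for which $k-i$ divides $\binom{n-i}{k-1-i}$ for all $i$ with $0 \le i \le k-2$, there exist two $k$-uniform hypergraphs $H_1$ and $H_2$, each on $n$ vertices, that do not pack and satisfy $|E(H_1)| + |E(H_2)| \le c\, n^{(k^2-k-1)/(2k-3)}$; in particular $m(n,k) \le c\, n^{(k^2-k-1)/(2k-3)}$. -/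

import Mathlib

/-- A family of edges is `k`-uniform if every edge has exactly `k` vertices. -/
def Uniform (k : ℕ) {V : Type*} (E : Finset (Finset V)) : Prop :=
  ∀ e ∈ E, e.card = k

/-- Two hypergraphs (given by their edge sets) pack if there is a bijection of the
vertex sets mapping every edge of the first to a non-edge of the second. -/
def Packs {V₁ V₂ : Type*} [DecidableEq V₂]
    (E₁ : Finset (Finset V₁)) (E₂ : Finset (Finset V₂)) : Prop :=
  ∃ f : V₁ ≃ V₂, ∀ e ∈ E₁, e.image f ∉ E₂

/-- `mMin n k` is the minimum possible value of `|E(H₁)| + |E(H₂)|` over all pairs of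
`k`-uniform hypergraphs `H₁`, `H₂` on `n` vertices that do not pack. The set is nonempty
exactly when `k ≤ n`. -/
noncomputable def mMin (n k : ℕ) : ℕ :=
  sInf {m | ∃ E₁ E₂ : Finset (Finset (Fin n)), Uniform k E₁ ∧ Uniform k E₂ ∧
    ¬ Packs E₁ E₂ ∧ E₁.card + E₂.card = m}

/-!
Fix `t ≤ k`. Let `H₁` consist of the `k`-sets meeting a fixed set `A` in at least `t` vertices,
split the vertices into `p` blocks of size at most `q`, and let `H₂` be a family of `k`-sets
covering every `t`-set that lies inside a block. If `#A > p (t - 1)`, then under any bijection some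
block receives `t` vertices of `A`, and an edge of `H₂` through these pulls back to an edge of `H₁`.
With `#A ≈ p` and `q ≈ n / p` the two hypergraphs have about `p ^ t * n ^ (k - t)` and
`p * (n / p) ^ t` edges. These numbers agree for `p ^ (2 t - 1) = n ^ (2 t - k)`, which gives the
exponent `(k (t - 1) + t) / (2 t - 1)`; the theorem is the case `t = k - 1`.
-/

section Construction

open Finset

variable {V W ι : Type*}

/-- The `k`-uniform hypergraph of all `k`-sets having at least `t` vertices in `A`; the first
hypergraph of the construction. -/
def setsMeeting [Fintype V] [DecidableEq V] (A : Finset V) (k t : ℕ) : Finset (Finset V) :=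
  {e ∈ powersetCard k univ | t ≤ #(e ∩ A)}

/-- The `t`-sets on which the colouring `c` is constant. The colour classes are the blocks whose
`t`-subsets the second hypergraph of the construction has to cover. -/
def monochromaticSets [Fintype V] [DecidableEq V] [Fintype ι] [DecidableEq ι]
    (c : V → ι) (t : ℕ) : Finset (Finset V) :=
  univ.biUnion fun i => powersetCard t {v | c v = i}

theorem mem_setsMeeting [Fintype V] [DecidableEq V] {A e : Finset V} {k t : ℕ} :
    e ∈ setsMeeting A k t ↔ #e = k ∧ t ≤ #(e ∩ A) := by
  simp [setsMeeting]

theorem mem_monochromaticSets [Fintype V] [DecidableEq V] [Fintype ι] [DecidableEq ι]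
    {c : V → ι} {t : ℕ} {S : Finset V} :
    S ∈ monochromaticSets c t ↔ (∃ i, ∀ v ∈ S, c v = i) ∧ #S = t := by
  simp [monochromaticSets, subset_iff]

theorem uniform_setsMeeting [Fintype V] [DecidableEq V] (A : Finset V) (k t : ℕ) :
    Uniform k (setsMeeting A k t) :=
  fun _ he => (mem_setsMeeting.mp he).1

theorem card_setsMeeting_le [Fintype V] [DecidableEq V] (A : Finset V) (k t : ℕ) :
    #(setsMeeting A k t) ≤ #A ^ t * Fintype.card V ^ (k - t) := by
  have hsub : setsMeeting A k t ⊆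
      image₂ (· ∪ ·) (powersetCard t A) (powersetCard (k - t) univ) := by
    intro e he
    obtain ⟨hek, het⟩ := mem_setsMeeting.mp he
    obtain ⟨S, hSe, hSt⟩ := exists_subset_card_eq het
    obtain ⟨hSe, hSA⟩ := subset_inter_iff.mp hSe
    refine mem_image₂.mpr ⟨S, mem_powersetCard.mpr ⟨hSA, hSt⟩, e \ S,
      mem_powersetCard.mpr ⟨subset_univ _, ?_⟩, union_sdiff_of_subset hSe⟩
    rw [card_sdiff_of_subset hSe, hek, hSt]
  calc #(setsMeeting A k t)
      ≤ #(powersetCard t A) * #(powersetCard (k - t) (univ : Finset V)) :=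
        (card_le_card hsub).trans (card_image₂_le _ _ _)
    _ = (#A).choose t * (Fintype.card V).choose (k - t) := by
        rw [card_powersetCard, card_powersetCard, card_univ]
    _ ≤ #A ^ t * Fintype.card V ^ (k - t) :=
        Nat.mul_le_mul (Nat.choose_le_pow _ _) (Nat.choose_le_pow _ _)

theorem card_monochromaticSets_le [Fintype V] [DecidableEq V] [Fintype ι] [DecidableEq ι]
    {c : V → ι} {q : ℕ} (hc : ∀ i, #{v | c v = i} ≤ q) (t : ℕ) :
    #(monochromaticSets c t) ≤ Fintype.card ι * q ^ t := by
  rw [← card_univ, ← smul_eq_mul]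
  refine card_biUnion_le.trans (sum_le_card_nsmul _ _ _ fun i _ => ?_)
  rw [card_powersetCard]
  exact (Nat.choose_le_pow _ _).trans (Nat.pow_le_pow_left (hc i) t)

theorem exists_uniform_cover [Fintype V] {F : Finset (Finset V)} {k : ℕ}
    (hF : ∀ S ∈ F, #S ≤ k) (hk : k ≤ Fintype.card V) :
    ∃ E : Finset (Finset V), Uniform k E ∧ #E ≤ #F ∧ ∀ S ∈ F, ∃ T ∈ E, S ⊆ T := by
  classical
  have hsup : ∀ S : F, ∃ T : Finset V, S.1 ⊆ T ∧ #T = k := fun S => by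
    obtain ⟨T, hST, -, hT⟩ := exists_subsuperset_card_eq (subset_univ S.1) (hF S S.2) hk
    exact ⟨T, hST, hT⟩
  choose g hSg hgk using hsup
  refine ⟨F.attach.image g, ?_, card_image_le.trans card_attach.le, fun S hS =>
    ⟨g ⟨S, hS⟩, mem_image_of_mem g (mem_attach F _), hSg ⟨S, hS⟩⟩⟩
  intro e he
  obtain ⟨S, -, rfl⟩ := mem_image.mp he
  exact hgk S

theorem exists_colouring_card_fiber_le [Fintype V] {p q : ℕ} (hV : Fintype.card V ≤ p * q) :
    ∃ c : V → Fin p, ∀ i, #{v | c v = i} ≤ q := by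
  obtain ⟨g⟩ : Nonempty (V ↪ Fin p × Fin q) :=
    Function.Embedding.nonempty_of_card_le (by simpa using hV)
  refine ⟨fun v => (g v).1, fun i => ?_⟩
  calc #{v | (g v).1 = i} ≤ #(univ : Finset (Fin q)) := by
        refine card_le_card_of_injOn (fun v => (g v).2) (fun _ _ => mem_coe.mpr (mem_univ _)) ?_
        intro v hv w hw hvw
        simp only [coe_filter, mem_univ, true_and, Set.mem_ofPred_eq] at hv hw
        exact g.injective (Prod.ext (hv.trans hw.symm) hvw)
    _ = q := by rw [card_univ, Fintype.card_fin]

theorem exists_monochromatic_subset [Fintype ι] {A : Finset V} {t : ℕ}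
    (c : V → ι) (hA : Fintype.card ι * (t - 1) < #A) :
    ∃ S ⊆ A, #S = t ∧ ∃ i, ∀ v ∈ S, c v = i := by
  classical
  obtain ⟨i, -, hi⟩ := exists_lt_card_fiber_of_mul_lt_card_of_maps_to
    (fun v _ => mem_univ (c v)) (by rwa [card_univ])
  obtain ⟨S, hS, hSt⟩ := exists_subset_card_eq (Nat.le_of_pred_lt hi)
  exact ⟨S, hS.trans (filter_subset _ _), hSt, i, fun v hv => (mem_filter.mp (hS hv)).2⟩

theorem not_packs_setsMeeting [Fintype V] [DecidableEq V] [Fintype W] [DecidableEq W] [Fintype ι]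
    [DecidableEq ι] {A : Finset V} {c : W → ι} {E : Finset (Finset W)} {k t : ℕ}
    (hE : Uniform k E) (hcover : ∀ S ∈ monochromaticSets c t, ∃ T ∈ E, S ⊆ T)
    (hA : Fintype.card ι * (t - 1) < #A) : ¬ Packs (setsMeeting A k t) E := by
  rintro ⟨f, hf⟩
  obtain ⟨S, hSA, hSt, i, hi⟩ := exists_monochromatic_subset (c ∘ f) hA
  have hmono : S.image f ∈ monochromaticSets c t :=
    mem_monochromaticSets.mpr ⟨⟨i, forall_mem_image.mpr hi⟩,
      (card_image_of_injective _ f.injective).trans hSt⟩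
  obtain ⟨T, hTE, hST⟩ := hcover _ hmono
  have hSe : S ⊆ T.image f.symm := by
    simpa [image_image] using image_subset_image (f := f.symm) hST
  refine hf (T.image f.symm) (mem_setsMeeting.mpr ⟨?_, ?_⟩) ?_
  · rw [card_image_of_injective _ f.symm.injective, hE T hTE]
  · exact hSt.symm.le.trans (card_le_card (subset_inter hSe hSA))
  · simpa [image_image] using hTE

theorem exists_not_packs_of_blocks [Fintype V] [DecidableEq V] {k t p q a : ℕ} (htk : t ≤ k)
    (hk : k ≤ Fintype.card V) (hpq : Fintype.card V ≤ p * q) (hpa : p * (t - 1) < a)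
    (ha : a ≤ Fintype.card V) :
    ∃ E₁ E₂ : Finset (Finset V), Uniform k E₁ ∧ Uniform k E₂ ∧ ¬ Packs E₁ E₂ ∧
      #E₁ ≤ a ^ t * Fintype.card V ^ (k - t) ∧ #E₂ ≤ p * q ^ t := by
  obtain ⟨A, -, rfl⟩ := exists_subset_card_eq (s := (univ : Finset V)) ha
  obtain ⟨c, hc⟩ := exists_colouring_card_fiber_le hpq
  obtain ⟨E, hE, hcard, hcover⟩ := exists_uniform_cover (F := monochromaticSets c t)
    (fun S hS => (mem_monochromaticSets.mp hS).2.trans_le htk) hk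
  refine ⟨setsMeeting A k t, E, uniform_setsMeeting A k t, hE,
    not_packs_setsMeeting hE hcover (by rwa [Fintype.card_fin]), card_setsMeeting_le A k t, ?_⟩
  simpa only [Fintype.card_fin] using hcard.trans (card_monochromaticSets_le hc t)

end Construction

section Balancing

open Finset

variable {k n t : ℕ} {x : ℝ}

/-- The maximum in `p * k ≤ max k x` leaves room for `p * k` vertices as soon as `k, x ≤ n`, so
that small `n` need no separate treatment. The witness is `p = max 1 ⌊x / k⌋`. -/
theorem exists_block_count (hk : 1 ≤ k) (hx : 1 ≤ x) :
    ∃ p : ℕ, 0 < p ∧ (p : ℝ) ≤ x ∧ x ≤ 2 * k * p ∧ (p * k : ℝ) ≤ max (k : ℝ) x := by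
  have hk1 : (1 : ℝ) ≤ k := by exact_mod_cast hk
  have hk0 : (0 : ℝ) < k := zero_lt_one.trans_le hk1
  have hx0 : 0 ≤ x := zero_le_one.trans hx
  have hfloor : (⌊x / k⌋₊ : ℝ) ≤ x / k := Nat.floor_le (by positivity)
  refine ⟨max 1 ⌊x / k⌋₊, by simp, ?_, ?_, ?_⟩ <;> push_cast
  · exact max_le hx (hfloor.trans (div_le_self hx0 hk1))
  · have hlt : x / k ≤ ⌊x / k⌋₊ + 1 := (Nat.lt_floor_add_one _).le
    rw [div_le_iff₀ hk0] at hlt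
    nlinarith [le_max_left (1 : ℝ) ⌊x / k⌋₊, le_max_right (1 : ℝ) ⌊x / k⌋₊]
  · rw [max_mul_of_nonneg _ _ hk0.le, one_mul]
    exact max_le_max_left _ ((le_div_iff₀ hk0).mp hfloor)

theorem exists_block_size {p : ℕ} (hp : 0 < p) (hpn : p ≤ n) :
    ∃ q : ℕ, n ≤ p * q ∧ (q : ℝ) ≤ 2 * (n / p) := by
  have hone : (1 : ℝ) ≤ n / p := (one_le_div (by exact_mod_cast hp)).mpr (by exact_mod_cast hpn)
  refine ⟨n / p + 1, (Nat.lt_mul_div_succ n hp).le, ?_⟩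
  calc ((n / p + 1 : ℕ) : ℝ) ≤ n / p + 1 := by push_cast; gcongr; exact Nat.cast_div_le
    _ ≤ 2 * (n / p) := by linarith

theorem exists_not_packs_card_le (htk : t ≤ k) (hk : 1 ≤ k) (hkn : k ≤ n) (hx : 1 ≤ x)
    (hxn : x ≤ n) :
    ∃ E₁ E₂ : Finset (Finset (Fin n)), Uniform k E₁ ∧ Uniform k E₂ ∧ ¬ Packs E₁ E₂ ∧
      (#E₁ : ℝ) ≤ (x * k) ^ t * n ^ (k - t) ∧ (#E₂ : ℝ) ≤ x * (4 * k * (n / x)) ^ t := by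
  obtain ⟨p, hp, hpx, hxp, hpk⟩ := exists_block_count hk hx
  have hpkn : p * k ≤ n := by
    exact_mod_cast hpk.trans (max_le (by exact_mod_cast hkn) hxn)
  obtain ⟨q, hpq, hq⟩ := exists_block_size hp ((Nat.le_mul_of_pos_right p hk).trans hpkn)
  have hx0 : 0 < x := zero_lt_one.trans_le hx
  have hp0 : (0 : ℝ) < p := by exact_mod_cast hp
  have hqx : (q : ℝ) ≤ 4 * k * (n / x) := by
    have hinv : (n : ℝ) / p ≤ 2 * k * (n / x) := by
      rw [← mul_div_assoc, div_le_div_iff₀ hp0 hx0]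
      nlinarith [mul_le_mul_of_nonneg_left hxp n.cast_nonneg]
    linarith
  obtain ⟨E₁, E₂, h₁, h₂, hpack, hcard₁, hcard₂⟩ :=
    exists_not_packs_of_blocks (V := Fin n) (k := k) (t := t) (p := p) (q := q) (a := p * k)
      htk (by simpa using hkn) (by simpa using hpq)
      (Nat.mul_lt_mul_of_pos_left (by omega) hp) (by simpa using hpkn)
  rw [Fintype.card_fin] at hcard₁
  refine ⟨E₁, E₂, h₁, h₂, hpack, ?_, ?_⟩
  · calc (#E₁ : ℝ) ≤ (p * k) ^ t * n ^ (k - t) := by exact_mod_cast hcard₁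
      _ ≤ (x * k) ^ t * n ^ (k - t) := by gcongr
  · calc (#E₂ : ℝ) ≤ p * q ^ t := by exact_mod_cast hcard₂
      _ ≤ x * (4 * k * (n / x)) ^ t := by gcongr

theorem rpow_pow_mul_pow_sub_eq {y : ℝ} (hy : 0 < y) (ht : 1 ≤ t) (htk : t ≤ k) :
    (y ^ (((2 * t - k) / (2 * t - 1)) : ℝ)) ^ t * y ^ (k - t) =
      y ^ ((k * (t - 1) + t) / (2 * t - 1) : ℝ) := by
  have ht1 : (1 : ℝ) ≤ t := by exact_mod_cast ht
  have hden : (2 * t - 1 : ℝ) ≠ 0 := by linarith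
  rw [← Real.rpow_mul_natCast hy.le, ← Real.rpow_natCast y, ← Real.rpow_add hy, Nat.cast_sub htk]
  congr 1
  field_simp
  ring

theorem rpow_mul_div_rpow_pow_eq {y : ℝ} (hy : 0 < y) (ht : 1 ≤ t) :
    y ^ (((2 * t - k) / (2 * t - 1)) : ℝ) * (y / y ^ (((2 * t - k) / (2 * t - 1)) : ℝ)) ^ t =
      y ^ ((k * (t - 1) + t) / (2 * t - 1) : ℝ) := by
  have ht1 : (1 : ℝ) ≤ t := by exact_mod_cast ht
  have hden : (2 * t - 1 : ℝ) ≠ 0 := by linarith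
  nth_rw 2 [← Real.rpow_one y]
  rw [← Real.rpow_sub hy, ← Real.rpow_mul_natCast hy.le, ← Real.rpow_add hy]
  congr 1
  field_simp
  ring

theorem exists_not_packs_card_add_card_le (ht : 1 ≤ t) (htk : t ≤ k) (hkt : k ≤ 2 * t)
    (hkn : k ≤ n) :
    ∃ E₁ E₂ : Finset (Finset (Fin n)), Uniform k E₁ ∧ Uniform k E₂ ∧ ¬ Packs E₁ E₂ ∧
      ((#E₁ + #E₂ : ℕ) : ℝ) ≤
        2 * (4 * k : ℝ) ^ t * (n : ℝ) ^ ((k * (t - 1) + t) / (2 * t - 1) : ℝ) := by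
  have hk : 1 ≤ k := ht.trans htk
  have hk1 : (1 : ℝ) ≤ k := by exact_mod_cast hk
  have ht1 : (1 : ℝ) ≤ t := by exact_mod_cast ht
  have hkt' : (k : ℝ) ≤ 2 * t := by exact_mod_cast hkt
  have hn1 : (1 : ℝ) ≤ n := by exact_mod_cast hk.trans hkn
  have hn0 : (0 : ℝ) < n := zero_lt_one.trans_le hn1
  have hden : (0 : ℝ) < 2 * t - 1 := by linarith
  have hexp0 : (0 : ℝ) ≤ (2 * t - k) / (2 * t - 1) := div_nonneg (by linarith) hden.le
  have hexp1 : ((2 * t - k) / (2 * t - 1) : ℝ) ≤ 1 := (div_le_one hden).mpr (by linarith)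
  obtain ⟨E₁, E₂, h₁, h₂, hpack, hcard₁, hcard₂⟩ := exists_not_packs_card_le htk hk hkn
    (Real.one_le_rpow hn1 hexp0) (Real.rpow_le_self_of_one_le hn1 hexp1)
  rw [mul_pow, mul_right_comm, rpow_pow_mul_pow_sub_eq hn0 ht htk] at hcard₁
  rw [mul_pow, mul_left_comm, rpow_mul_div_rpow_pow_eq hn0 ht] at hcard₂
  refine ⟨E₁, E₂, h₁, h₂, hpack, ?_⟩
  have hkpow : (k : ℝ) ^ t ≤ (4 * k) ^ t := by gcongr; linarith
  push_cast
  linarith [mul_le_mul_of_nonneg_left hkpow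
    (Real.rpow_nonneg hn0.le ((k * (t - 1) + t) / (2 * t - 1) : ℝ))]

end Balancing

theorem mMin_le {n k : ℕ} {E₁ E₂ : Finset (Finset (Fin n))} (h₁ : Uniform k E₁)
    (h₂ : Uniform k E₂) (hpack : ¬ Packs E₁ E₂) : mMin n k ≤ E₁.card + E₂.card :=
  Nat.sInf_le ⟨E₁, E₂, h₁, h₂, hpack, rfl⟩

/-- The exponent increases with `t`, so `t = ⌈k / 2⌉` gives the best bound. -/
theorem stmt_2_general (k t : ℕ) (ht : 1 ≤ t) (htk : t ≤ k) (hkt : k ≤ 2 * t) :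
    ∃ c : ℝ, 0 < c ∧ ∀ n : ℕ, k ≤ n →
      (∃ E₁ E₂ : Finset (Finset (Fin n)), Uniform k E₁ ∧ Uniform k E₂ ∧ ¬ Packs E₁ E₂ ∧
        ((E₁.card + E₂.card : ℕ) : ℝ) ≤
          c * (n : ℝ) ^ (((k : ℝ) * (t - 1) + t) / (2 * (t : ℝ) - 1))) ∧
      (mMin n k : ℝ) ≤ c * (n : ℝ) ^ (((k : ℝ) * (t - 1) + t) / (2 * (t : ℝ) - 1)) := by
  have hk : 0 < k := ht.trans htk
  refine ⟨2 * (4 * k : ℝ) ^ t, by positivity, fun n hkn => ?_⟩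
  obtain ⟨E₁, E₂, h₁, h₂, hpack, hcard⟩ := exists_not_packs_card_add_card_le ht htk hkt hkn
  exact ⟨⟨E₁, E₂, h₁, h₂, hpack, hcard⟩, (Nat.cast_le.mpr (mMin_le h₁ h₂ hpack)).trans hcard⟩

/-- For odd `k ≥ 3` there is a constant `c` depending only on `k` such that for every `n ≥ k`
with `k - i ∣ C(n - i, k - 1 - i)` for all `0 ≤ i ≤ k - 2`, there are two non-packing
`k`-uniform hypergraphs on `n` vertices with at most `c * n ^ ((k² - k - 1) / (2k - 3))` edges
in total; in particular `m(n,k)` is at most this bound. -/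
theorem stmt_2 (k : ℕ) (hk : 3 ≤ k) (hodd : Odd k) :
    ∃ c : ℝ, 0 < c ∧ ∀ n : ℕ, k ≤ n →
      (∀ i : ℕ, i ≤ k - 2 → (k - i) ∣ (n - i).choose (k - 1 - i)) →
      (∃ E₁ E₂ : Finset (Finset (Fin n)), Uniform k E₁ ∧ Uniform k E₂ ∧ ¬ Packs E₁ E₂ ∧
        ((E₁.card + E₂.card : ℕ) : ℝ) ≤
          c * (n : ℝ) ^ (((k : ℝ) ^ 2 - (k : ℝ) - 1) / (2 * (k : ℝ) - 3))) ∧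
      (mMin n k : ℝ) ≤ c * (n : ℝ) ^ (((k : ℝ) ^ 2 - (k : ℝ) - 1) / (2 * (k : ℝ) - 3)) := by
  have hexp : ((k : ℝ) ^ 2 - k - 1) / (2 * k - 3) =
      (k * ((k - 1 : ℕ) - 1) + (k - 1 : ℕ)) / (2 * (k - 1 : ℕ) - 1) := by
    push_cast [show 1 ≤ k by omega]
    congr 1 <;> ring
  obtain ⟨c, hc, hbound⟩ := stmt_2_general k (k - 1) (by omega) (by omega) (by omega)
  exact ⟨c, hc, fun n hkn _ => hexp ▸ hbound n hkn⟩
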